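/- Let n ≥ 2, 1 ≤ i < n, and let L''_{n,i} ∈ ℝ^{n×n} be the matrix with (L''_{n,i})_{kk} = 2 for k ∉ {i, n}, (L''_{n,i})_{ii} = 1, (L''_{n,i})_{nn} = 1, (L''_{n,i})_{k+1,k} = −1 for 1 ≤ k ≤ n−1, (L''_{n,i})_{k,k+1} = −1 for 1 ≤ k ≤ n−1 with k ≠ i, (L''_{n,i})_{1,n} = −1, and all other entries 0. Then L''_{n,i} has a complex eigenvalue with nonzero imaginary part if and only if 2i ∉ {n−1, n, n+1}. Moreover, if 2i = n then the characteristic polynomial factors over ℝ as Π_{k=1}^{n/2} (λ − 4·cos²(πk/n))·(λ − 4·cos²(πk/(n+2))), and if 2i = n−1 or 2i = n+1 then it factors as Π_{k=1}^{n} (λ − 4·cos²(πk/(n+1))). -/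

import Mathlib

open Polynomial Real

theorem hess_det (m : ℕ) (M : Matrix (Fin (m+1)) (Fin (m+1)) ℝ) (v : Fin (m+1) → ℝ) (r : ℝ)
    (hsub : ∀ j k : Fin (m+1), (k : ℕ) + 1 = j → M j k = 1)
    (hlow : ∀ j k : Fin (m+1), (k : ℕ) + 1 < j → M j k = 0)
    (hl : v (Fin.last m) = 1)
    (hv : ∀ j, ∑ k, v k • M j k = if j = 0 then r else 0) :
    M.det = (-1) ^ m * r := by
  have h := Matrix.det_updateCol_sum M (Fin.last m) v
  rw [hl, one_smul] at h
  rw [← h, Matrix.det_succ_column _ (Fin.last m), Finset.sum_eq_single 0]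
  · rw [Matrix.updateCol_self, hv, if_pos rfl, Matrix.det_of_isUpperTriangular, Finset.prod_eq_one]
    · simp
    · intro k _
      rw [Matrix.submatrix_apply, Matrix.updateCol_ne (by simp [Fin.ext_iff]; omega)]
      apply hsub; simp
    · intro j k hjk
      rw [Matrix.submatrix_apply, Matrix.updateCol_ne (by simp [Fin.ext_iff]; omega)]
      apply hlow; simp at hjk ⊢; exact hjk
  · intro j _ hj
    rw [Matrix.updateCol_self, hv, if_neg hj]; simp
  · simp

noncomputable def bb (x : ℝ) : ℕ → ℝ
  | 0 => 1
  | 1 => 1 - x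
  | (m+2) => (2 - x) * bb x (m+1) - bb x m

theorem bb_cos (s : ℝ) (m : ℕ) : bb (4 * sin s ^ 2) m * cos s = cos ((2 * m + 1) * s) := by
  induction m using Nat.twoStepInduction with
  | zero => simp [bb]
  | one =>
    have : ((2 * ((1:ℕ):ℝ) + 1) * s) = 3 * s := by push_cast; ring
    rw [this, cos_three_mul, bb]
    have := sin_sq_add_cos_sq s
    linear_combination (-4 * cos s) * this
  | more m h1 h2 =>
    rw [bb, sub_mul, mul_assoc, h2, h1]
    have e : (2 - 4 * sin s ^ 2) = 2 * cos (2 * s) := by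
      rw [cos_two_mul]; have := sin_sq_add_cos_sq s; linear_combination (-4) * this
    rw [e]
    have e1 := cos_add ((2 * ((m+1:ℕ):ℝ) + 1) * s) (2 * s)
    have e2 := cos_sub ((2 * ((m+1:ℕ):ℝ) + 1) * s) (2 * s)
    have e3 : ((2 * ((m+1:ℕ):ℝ) + 1) * s) + 2 * s = (2 * ((m+2:ℕ):ℝ) + 1) * s := by push_cast; ring
    have e4 : ((2 * ((m+1:ℕ):ℝ) + 1) * s) - 2 * s = (2 * (m:ℝ) + 1) * s := by push_cast; ring
    rw [e3] at e1; rw [e4] at e2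
    rw [e1, e2]; ring

theorem bb_sin (s : ℝ) (m : ℕ) :
    bb (4 * cos s ^ 2) m * sin s = (-1) ^ m * sin ((2 * m + 1) * s) := by
  have h := bb_cos (π / 2 - s) m
  rw [sin_pi_div_two_sub, cos_pi_div_two_sub] at h
  rw [h]
  have : (2 * (m:ℝ) + 1) * (π / 2 - s) = (π / 2 - (2 * m + 1) * s) + m * π := by ring
  rw [this, cos_add_nat_mul_pi, cos_pi_div_two_sub]

theorem term_eq (m i : ℕ) (w : ℕ → ℝ) (x : ℝ) (J K : ℕ) (hn : 2 ≤ m + 1) (hi : 1 ≤ i)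
    (hin : i < m + 1) (hk : K < m + 1) (hj : J < m + 1) :
    w K * ((if J = K then x else 0) - if J = K then (if J = i - 1 ∨ J = m then 1 else 2)
      else if (J + 1 = K ∧ J + 1 ≠ i) ∨ K + 1 = J ∨ (J = 0 ∧ K = m) then -1 else 0) =
    (if K = J then w J * (x - if J = i - 1 ∨ J = m then 1 else 2) else 0)
        + (if K + 1 = J then w (J - 1) else 0)
        + (if K = J + 1 then (if J + 1 ≠ i then w (J + 1) else 0) else 0)
        + (if K = m then (if J = 0 then w m else 0) else 0) := by
  by_cases h1 : J = K
  · subst h1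
    have a : ¬ (J + 1 = J) := by omega
    have b : ∀ y : ℝ, (if J = m then (if J = 0 then y else 0) else 0) = 0 := by
      intro y; split_ifs <;> first | rfl | omega
    rw [b]; simp
  · rw [if_neg h1, if_neg h1, if_neg (show ¬ K = J from fun h => h1 h.symm)]
    by_cases h2 : K + 1 = J
    · subst h2
      rw [if_pos (by omega), if_pos rfl, if_neg (show ¬ K = K + 1 + 1 by omega),
        if_neg (show ¬ K = m by omega)]
      simp
    · rw [if_neg h2]
      by_cases h3 : K = J + 1
      · subst h3
        rw [if_pos rfl]
        by_cases h5 : J + 1 = i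
        · rw [if_neg (show ¬ (J + 1 ≠ i) by omega)]
          by_cases h4 : J = 0
          · by_cases h6 : J + 1 = m
            · rw [if_pos (by omega), if_pos h6, if_pos h4, h6]; ring
            · rw [if_neg (by omega), if_neg h6]; ring
          · rw [if_neg (by omega), if_neg h4]; simp
        · rw [if_pos (by omega), if_pos h5]
          have b : ∀ y : ℝ, (if J + 1 = m then (if J = 0 then y else 0) else 0) = 0 := by
            intro y; split_ifs <;> first | rfl | omega
          rw [b]; ring
      · rw [if_neg h3]
        by_cases h4 : K = m
        · by_cases h5 : J = 0
          · rw [if_pos (by omega), if_pos h4, if_pos h5, h4]; ring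
          · rw [if_neg (by omega), if_pos h4, if_neg h5]; ring
        · rw [if_neg (by omega), if_neg h4]; ring

theorem charpoly_eval (n i : ℕ) (hn : 2 ≤ n) (hi : 1 ≤ i) (hin : i < n)
    (L : Matrix (Fin n) (Fin n) ℝ)
    (hL : ∀ j k : Fin n, L j k =
      if j = k then (if (j : ℕ) = i - 1 ∨ (j : ℕ) = n - 1 then 1 else 2)
      else if ((j : ℕ) + 1 = (k : ℕ) ∧ (j : ℕ) + 1 ≠ i) ∨ (k : ℕ) + 1 = (j : ℕ) ∨
          ((j : ℕ) = 0 ∧ (k : ℕ) = n - 1) then -1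
      else 0) (x : ℝ) :
    L.charpoly.eval x = (-1) ^ n * (bb x i * bb x (n - i) - 1) := by
  rw [Matrix.eval_charpoly]
  obtain ⟨m, rfl⟩ : ∃ m, n = m + 1 := ⟨n - 1, by omega⟩
  let w : ℕ → ℝ := fun j => if j < i then bb x (i - 1 - j) * bb x (m + 1 - i) else bb x (m - j)
  have key := hess_det m (Matrix.scalar (Fin (m+1)) x - L) (fun k => w k)
    (1 - bb x i * bb x (m + 1 - i)) ?_ ?_ ?_ ?_
  · rw [key]; ring
  · intro j k h
    have hjk : j ≠ k := by intro h'; subst h'; omega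
    rw [Matrix.sub_apply, hL, Matrix.scalar_apply, Matrix.diagonal_apply_ne _ hjk, if_neg hjk,
      if_pos (by omega)]
    norm_num
  · intro j k h
    have hjk : j ≠ k := by intro h'; subst h'; omega
    rw [Matrix.sub_apply, hL, Matrix.scalar_apply, Matrix.diagonal_apply_ne _ hjk, if_neg hjk,
      if_neg (by omega)]
    norm_num
  · simp [w, bb, show ¬ m < i by omega]
  · intro j
    have hterm : ∀ k : Fin (m+1), w k • (Matrix.scalar (Fin (m+1)) x - L) j k =
        (if k = j then w j * (x - if (j : ℕ) = i - 1 ∨ (j : ℕ) = m then 1 else 2) else 0)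
        + (if (k : ℕ) + 1 = j then w (j - 1) else 0)
        + (if (k : ℕ) = j + 1 then (if (j : ℕ) + 1 ≠ i then w (j + 1) else 0) else 0)
        + (if k = Fin.last m then (if j = 0 then w m else 0) else 0) := by
      intro k
      rw [Matrix.sub_apply, hL, Matrix.scalar_apply, Matrix.diagonal_apply]
      have hk := k.2
      have hj := j.2
      simp only [Fin.ext_iff, Fin.val_last, Fin.val_zero, smul_eq_mul, Nat.add_sub_cancel]
      exact term_eq m i w x j k hn hi hin hk hj
    rw [Finset.sum_congr rfl (fun k _ => hterm k)]
    simp only [Finset.sum_add_distrib]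
    rw [Finset.sum_ite_eq' , Finset.sum_ite_eq']
    have s1 : ∀ y : ℝ, (∑ k : Fin (m+1), if (k:ℕ) + 1 = j then y else 0) = if (j:ℕ) = 0 then 0 else y := by
      intro y
      by_cases h : (j:ℕ) = 0
      · simp [h]
      · rw [if_neg h, Finset.sum_eq_single ⟨(j:ℕ) - 1, by omega⟩]
        · rw [if_pos (by simp; omega)]
        · intro k _ hk
          rw [if_neg]; intro h'; apply hk; ext; simp; omega
        · simp
    have s2 : ∀ y : ℝ, (∑ k : Fin (m+1), if (k:ℕ) = j + 1 then y else 0) = if (j:ℕ) = m then 0 else y := by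
      intro y
      by_cases h : (j:ℕ) = m
      · rw [if_pos h]; apply Finset.sum_eq_zero
        intro k _; rw [if_neg]; omega
      · rw [if_neg h, Finset.sum_eq_single ⟨(j:ℕ) + 1, by omega⟩]
        · rw [if_pos (by simp)]
        · intro k _ hk
          rw [if_neg]; intro h'; apply hk; ext; simp; omega
        · simp
    rw [s1, s2]
    simp only [Finset.mem_univ, if_true, Fin.ext_iff, Fin.val_zero]
    have hj := j.2
    generalize (j:ℕ) = t at hj
    clear s1 s2 hterm hL
    have wm : w m = 1 := by simp [w, bb, show ¬ m < i by omega]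
    rw [wm]
    have recc : ∀ p, bb x (p + 2) = (2 - x) * bb x (p+1) - bb x p := fun p => by rw [bb]
    have b0 : bb x 0 = 1 := by rw [bb]
    have b1 : bb x 1 = 1 - x := by rw [bb]
    by_cases t0 : t = 0
    · subst t0
      by_cases hi1 : i = 1
      · subst hi1
        have : ¬ (0 = m) := by omega
        simp [w, this, b0, b1]; ring
      · obtain ⟨p, rfl⟩ : ∃ p, i = p + 2 := ⟨i - 2, by omega⟩
        have : ¬ (0 = m) := by omega
        simp [w, this, recc]; ring
    · by_cases tm : t = m
      · subst tm
        have e1 : ¬ t < i := by omega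
        by_cases e2 : t - 1 < i
        · have : t = i := by omega
          subst this
          have h0 : 0 < t := by omega
          simp [w, t0, b0, b1, h0]
        · have : t - (t - 1) = 1 := by omega
          simp [w, t0, e1, e2, this, b0, b1]
      · by_cases ti : t + 1 = i
        · subst ti
          obtain ⟨u, rfl⟩ : ∃ u, t = u + 1 := ⟨t - 1, by omega⟩
          simp [w, tm, b0, b1]; ring
        · by_cases tl : t < i
          · obtain ⟨u, rfl⟩ : ∃ u, t = u + 1 := ⟨t - 1, by omega⟩
            obtain ⟨p, rfl⟩ : ∃ p, i = u + p + 3 := ⟨i - u - 3, by omega⟩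
            have a1 : u + p + 3 - 1 - u = p + 2 := by omega
            have a2 : u + p + 3 - 1 - (u + 1) = p + 1 := by omega
            have a3 : u + p + 3 - 1 - (u + 1 + 1) = p := by omega
            have a4 : u < u + p + 3 := by omega
            have a5 : u + 1 < u + p + 3 := by omega
            have a6 : u + 1 + 1 < u + p + 3 := by omega
            have a7 : ¬ u + 1 = u + p + 3 - 1 := by omega
            simp only [w, tm, t0, ne_eq, ti, Nat.add_sub_cancel, a1, a2, a3, a4, a5, a6, a7, recc,
              or_self, if_true, if_false, not_false_eq_true]
            ring
          · obtain ⟨u, rfl⟩ : ∃ u, t = u + 1 := ⟨t - 1, by omega⟩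
            obtain ⟨p, rfl⟩ : ∃ p, m = u + p + 2 := ⟨m - u - 2, by omega⟩
            have a1 : u + p + 2 - u = p + 2 := by omega
            have a2 : u + p + 2 - (u + 1) = p + 1 := by omega
            have a3 : u + p + 2 - (u + 1 + 1) = p := by omega
            have a5 : ¬ u + 1 < i := by omega
            have a6 : ¬ u + 1 + 1 < i := by omega
            have a7 : ¬ u + 1 = i - 1 := by omega
            have wu : w u = bb x (p + 2) := by
              by_cases h : u < i
              · have : i = u + 1 := by omega
                subst this
                have : u + p + 2 + 1 - (u + 1) = p + 2 := by omega
                simp [w, b0, this]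
              · simp only [w, h, a1]; simp
            have w1 : w (u+1) = bb x (p+1) := by simp only [w, a5, a2]; simp
            have w2 : w (u+1+1) = bb x p := by simp only [w, a6, a3]; simp
            simp only [Nat.add_sub_cancel, wu, w1, w2, recc]
            simp only [tm, t0, a7, ne_eq, ti, or_self, if_true, if_false, not_false_eq_true]
            ring

theorem U_prod (N : ℕ) (c : ℝ) : (Chebyshev.U ℝ N).eval c =
    ∏ k ∈ Finset.Icc 1 N, (2 * c - 2 * cos (π * k / (N + 1))) := by
  have hr := Chebyshev.roots_U_real N
  have hnd := Chebyshev.roots_U_real_nodup N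
  have hinj := (Finset.range N).nodup_map_iff_injOn.mp hnd
  have hcard : (Chebyshev.U ℝ N).roots.card = (Chebyshev.U ℝ N).natDegree := by
    rw [hr, Chebyshev.natDegree_U_natCast, Finset.card_val, Finset.card_image_of_injOn hinj,
      Finset.card_range]
  have h := C_leadingCoeff_mul_prod_multiset_X_sub_C hcard
  rw [← h, hr, Chebyshev.leadingCoeff_U_natCast, eval_mul, eval_C, eval_multiset_prod]
  simp only [Multiset.map_map, Function.comp, eval_sub, eval_X, eval_C]
  have e : (Multiset.map (fun x => c - x)
      ((Finset.range N).image (fun (k : ℕ) => cos ((k + 1) * π / (N + 1)))).val).prod =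
      ∏ x ∈ ((Finset.range N).image (fun (k : ℕ) => cos ((k + 1) * π / (N + 1)))), (c - x) := rfl
  rw [e, Finset.prod_image hinj]
  have e2 : (2:ℝ) ^ N = ∏ x ∈ Finset.range N, 2 := by simp
  rw [e2, ← Finset.prod_mul_distrib]
  apply Finset.prod_nbij' (fun k => k + 1) (fun k => k - 1)
  all_goals intro k hk; simp only [Finset.mem_Icc, Finset.mem_range] at hk ⊢
  any_goals omega
  rw [mul_sub, mul_comm π]; push_cast; rfl

theorem refl_prod (f : ℕ → ℝ) (N : ℕ) :
    ∏ k ∈ Finset.Icc 1 N, f k = ∏ k ∈ Finset.Icc 1 N, f (N + 1 - k) := by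
  apply Finset.prod_nbij' (fun k => N + 1 - k) (fun k => N + 1 - k)
  all_goals intro k hk; simp only [Finset.mem_Icc] at hk ⊢
  any_goals omega
  congr 1; omega

theorem odd_prod (f : ℕ → ℝ) (m : ℕ) :
    ∏ k ∈ Finset.Icc 1 (2 * m + 1), f k =
      f (m + 1) * ∏ k ∈ Finset.Icc 1 m, f k * f (2 * m + 2 - k) := by
  have e : Finset.Icc 1 (2 * m + 1) = insert (m+1) (Finset.Icc 1 m ∪ Finset.Icc (m+2) (2*m+1)) := by
    ext k; simp; omega
  rw [e, Finset.prod_insert (by simp), Finset.prod_union, Finset.prod_mul_distrib]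
  · congr 2
    apply Finset.prod_nbij' (fun k => 2 * m + 2 - k) (fun k => 2 * m + 2 - k)
    all_goals intro k hk; simp only [Finset.mem_Icc] at hk ⊢
    any_goals omega
    congr 1; omega
  · rw [Finset.disjoint_left]; intro k; simp; omega

theorem cos_refl (N k : ℕ) (hk : k ≤ N + 1) :
    cos (π * ((N + 1 - k : ℕ) : ℝ) / (N + 1)) = - cos (π * k / (N + 1)) := by
  rw [← cos_pi_sub]; congr 1
  rw [Nat.cast_sub hk]; push_cast
  have : (N:ℝ) + 1 ≠ 0 := by positivity
  field_simp

theorem U_sq (N : ℕ) (c : ℝ) : (Chebyshev.U ℝ N).eval c ^ 2 =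
    ∏ k ∈ Finset.Icc 1 N, (4 * c ^ 2 - 4 * cos (π * k / (N + 1)) ^ 2) := by
  have e2 := (U_prod N c).trans (refl_prod _ N)
  rw [sq]
  nth_rw 2 [e2]
  rw [U_prod, ← Finset.prod_mul_distrib]
  apply Finset.prod_congr rfl
  intro k hk
  simp only [Finset.mem_Icc] at hk
  rw [cos_refl N k (by omega)]; ring

theorem U_odd (m : ℕ) (c : ℝ) : (Chebyshev.U ℝ ((2 * m + 1 : ℕ) : ℤ)).eval c =
    2 * c * ∏ k ∈ Finset.Icc 1 m, (4 * c ^ 2 - 4 * cos (π * k / (2 * m + 2)) ^ 2) := by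
  rw [U_prod, odd_prod]
  congr 1
  · have : π * ((m + 1 : ℕ) : ℝ) / (((2 * m + 1 : ℕ) : ℝ) + 1) = π / 2 := by
      push_cast; have : (m:ℝ) + 1 ≠ 0 := by positivity
      have : 2 * (m:ℝ) + 1 + 1 ≠ 0 := by positivity
      field_simp; ring
    rw [this, cos_pi_div_two]; ring
  · apply Finset.prod_congr rfl
    intro k hk
    simp only [Finset.mem_Icc] at hk
    have := cos_refl (2 * m + 1) k (by omega)
    rw [show 2 * m + 1 + 1 - k = 2 * m + 2 - k by omega] at this
    rw [this]; push_cast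
    rw [show (2 * (m:ℝ) + 1 + 1) = 2 * m + 2 by ring]
    ring

theorem poly_eq_of_trig (p q : ℝ[X])
    (h : ∀ θ : ℝ, 0 < sin θ → p.eval (4 * cos θ ^ 2) = q.eval (4 * cos θ ^ 2)) : p = q := by
  apply eq_of_infinite_eval_eq
  apply Set.Infinite.mono _ (Set.Ioo_infinite (show (0:ℝ) < 4 by norm_num))
  intro x hx
  have h1 : √x / 2 < 1 := by
    have : √x < 2 := by rw [sqrt_lt' (by norm_num)]; linarith [hx.2]
    linarith
  have h0 : 0 ≤ √x / 2 := by positivity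
  have e : 4 * cos (arccos (√x / 2)) ^ 2 = x := by
    rw [cos_arccos (by linarith) h1.le, div_pow, sq_sqrt hx.1.le]; ring
  have := h (arccos (√x / 2)) (by
    rw [sin_arccos]; apply sqrt_pos.2; nlinarith)
  rw [e] at this; exact this

theorem splits_of_real (p : ℝ[X])
    (h : ¬ ∃ z : ℂ, z.im ≠ 0 ∧ (Polynomial.aeval z) p = 0) : p.Splits := by
  apply Splits.of_splits_map (algebraMap ℝ ℂ) (IsAlgClosed.splits _)
  intro a ha
  push Not at h
  by_cases him : a.im = 0
  · exact ⟨a.re, by apply Complex.ext <;> simp [him]⟩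
  · exfalso
    apply h a him
    rw [aeval_def, ← eval_map]
    exact isRoot_of_mem_roots ha

theorem multiset_logconcave (y1 y2 y3 w : ℝ) (hw0 : 0 < w) (hw1 : w < 1)
    (hy : y2 = w * y1 + (1 - w) * y3) (h13 : y1 ≤ y3) (m : Multiset ℝ)
    (hm : ∀ r ∈ m, r < y1 ∨ y3 < r) :
    |(m.map (fun r => y1 - r)).prod| ^ w * |(m.map (fun r => y3 - r)).prod| ^ (1 - w) ≤
      |(m.map (fun r => y2 - r)).prod| := by
  induction m using Multiset.induction with
  | empty => simp
  | cons r m ih =>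
    have ih := ih (fun s hs => hm s (Multiset.mem_cons_of_mem hs))
    have hr := hm r (Multiset.mem_cons_self r m)
    simp only [Multiset.map_cons, Multiset.prod_cons, abs_mul]
    rw [mul_rpow (abs_nonneg _) (abs_nonneg _), mul_rpow (abs_nonneg _) (abs_nonneg _)]
    have key : |y1 - r| ^ w * |y3 - r| ^ (1 - w) ≤ |y2 - r| := by
      have := geom_mean_le_arith_mean2_weighted hw0.le (sub_nonneg.2 hw1.le)
        (abs_nonneg (y1 - r)) (abs_nonneg (y3 - r)) (by ring)
      refine this.trans (le_of_eq ?_)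
      have e : y2 - r = w * (y1 - r) + (1 - w) * (y3 - r) := by rw [hy]; ring
      rw [e]
      rcases hr with hr | hr
      · rw [abs_of_pos (by linarith : 0 < y1 - r), abs_of_pos (by linarith : 0 < y3 - r), abs_of_pos]
        have := mul_pos hw0 (by linarith : 0 < y1 - r)
        have := mul_pos (sub_pos.2 hw1) (by linarith : 0 < y3 - r)
        linarith
      · rw [abs_of_neg (by linarith : y1 - r < 0), abs_of_neg (by linarith : y3 - r < 0), abs_of_neg]
        · ring
        have := mul_neg_of_pos_of_neg hw0 (by linarith : y1 - r < 0)
        have := mul_neg_of_pos_of_neg (sub_pos.2 hw1) (by linarith : y3 - r < 0)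
        linarith
    calc _ = (|y1 - r| ^ w * |y3 - r| ^ (1 - w)) * (|(m.map (fun r => y1 - r)).prod| ^ w * |(m.map (fun r => y3 - r)).prod| ^ (1 - w)) := by ring
      _ ≤ _ := mul_le_mul key ih (by positivity) (abs_nonneg _)

theorem no_dip (p : ℝ[X]) (hs : p.Splits) (hmon : p.Monic) (y1 y2 y3 : ℝ) (h12 : y1 < y2) (h23 : y2 < y3)
    (hroot : ∀ y, y1 ≤ y → y ≤ y3 → p.eval y ≠ 0)
    (h1 : 1 < |p.eval y1|) (h3 : 1 ≤ |p.eval y3|) (h2 : |p.eval y2| ≤ 1) : False := by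
  have h13 : 0 < y3 - y1 := by linarith
  have := multiset_logconcave y1 y2 y3 ((y3 - y2) / (y3 - y1)) (div_pos (by linarith) h13)
    ((div_lt_one h13).2 (by linarith)) (by field_simp; ring) (by linarith) p.roots (by
      intro r hr
      by_contra hc
      push Not at hc
      exact hroot r hc.1 hc.2 (isRoot_of_mem_roots hr))
  rw [← hs.eval_eq_prod_roots_of_monic hmon, ← hs.eval_eq_prod_roots_of_monic hmon,
    ← hs.eval_eq_prod_roots_of_monic hmon] at this
  have a1 := one_lt_rpow h1 (div_pos (by linarith : 0 < y3 - y2) h13)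
  have a3 := one_le_rpow h3 (z := 1 - (y3 - y2) / (y3 - y1))
    (sub_nonneg.2 ((div_lt_one h13).2 (by linarith)).le)
  nlinarith

theorem dip_contra (P : ℝ[X]) (hs : P.Splits) (hmon : P.Monic) (p q : ℕ) (σ : ℝ) (hσ : |σ| = 1)
    (hP : ∀ x, P.eval x = σ * (bb x p * bb x q - 1)) (s1 s2 s3 : ℝ) (h0 : 0 < s1)
    (h12 : s1 < s2) (h23 : s2 < s3) (h3 : s3 < π / 2)
    (hreg : ∀ s, 0 < s → s ≤ s3 → cos ((2 * p + 1) * s) * cos ((2 * q + 1) * s) < cos s ^ 2)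
    (k1 : cos ((2 * p + 1) * s1) * cos ((2 * q + 1) * s1) < 0)
    (k2 : 0 ≤ cos ((2 * p + 1) * s2) * cos ((2 * q + 1) * s2))
    (k3 : cos ((2 * p + 1) * s3) * cos ((2 * q + 1) * s3) ≤ 0) : False := by
  have key : ∀ s, 0 < s → s ≤ s3 → 0 < cos s ^ 2 ∧ 0 < |P.eval (4 * sin s ^ 2)| ∧
      |P.eval (4 * sin s ^ 2)| * cos s ^ 2 =
        cos s ^ 2 - cos ((2 * p + 1) * s) * cos ((2 * q + 1) * s) := by
    intro s hs0 hs3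
    have hc : 0 < cos s := cos_pos_of_mem_Ioo ⟨by linarith, by linarith⟩
    have hc2 : 0 < cos s ^ 2 := by positivity
    have hr := hreg s hs0 hs3
    have e1 := bb_cos s p
    have e2 := bb_cos s q
    have e : |P.eval (4 * sin s ^ 2)| * cos s ^ 2 =
        cos s ^ 2 - cos ((2 * p + 1) * s) * cos ((2 * q + 1) * s) := by
      rw [hP, abs_mul, hσ, one_mul, ← abs_of_pos hc2, ← abs_mul, abs_of_pos hc2]
      have : (bb (4 * sin s ^ 2) p * bb (4 * sin s ^ 2) q - 1) * cos s ^ 2 =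
        - (cos s ^ 2 - cos ((2 * p + 1) * s) * cos ((2 * q + 1) * s)) := by
        rw [← e1, ← e2]; ring
      rw [this, abs_neg, abs_of_pos (by linarith)]
    refine ⟨hc2, ?_, e⟩
    by_contra hneg
    have : |P.eval (4 * sin s ^ 2)| = 0 := le_antisymm (not_lt.1 hneg) (abs_nonneg _)
    rw [this] at e; linarith
  have mono : ∀ s t, 0 < s → s < t → t ≤ s3 → 4 * sin s ^ 2 < 4 * sin t ^ 2 := by
    intro s t a b c
    have h1 : sin s < sin t := sin_lt_sin_of_lt_of_le_pi_div_two (by linarith) (by linarith) b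
    have h2 : 0 < sin s := sin_pos_of_pos_of_lt_pi a (by linarith [pi_pos])
    nlinarith
  refine no_dip P hs hmon (4 * sin s1 ^ 2) (4 * sin s2 ^ 2) (4 * sin s3 ^ 2)
    (mono _ _ h0 h12 h23.le) (mono _ _ (by linarith) h23 le_rfl) ?_ ?_ ?_ ?_
  · intro y hy1 hy3
    have hcont : ContinuousOn (fun s => 4 * sin s ^ 2) (Set.Icc s1 s3) := by fun_prop
    obtain ⟨s, hs, rfl⟩ := intermediate_value_Icc (by linarith) hcont ⟨hy1, hy3⟩
    exact abs_pos.1 (key s (by linarith [hs.1]) hs.2).2.1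
  · obtain ⟨a, _, c⟩ := key s1 h0 (by linarith)
    nlinarith
  · obtain ⟨a, _, c⟩ := key s3 (by linarith) le_rfl
    nlinarith
  · obtain ⟨a, _, c⟩ := key s2 (by linarith) h23.le
    nlinarith

set_option maxHeartbeats 2000000 in
theorem not_splits (P : ℝ[X]) (hs : P.Splits) (hmon : P.Monic) (p q : ℕ) (hp : 1 ≤ p)
    (hpq : p + 2 ≤ q) (σ : ℝ) (hσ : |σ| = 1)
    (hP : ∀ x, P.eval x = σ * (bb x p * bb x q - 1)) : False := by
  have hpi := pi_pos
  set a : ℝ := 2 * p + 1 with ha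
  set b : ℝ := 2 * q + 1 with hb
  have hp' : (1:ℝ) ≤ p := by exact_mod_cast hp
  have hpq' : (p:ℝ) + 2 ≤ q := by exact_mod_cast hpq
  have a3 : 3 ≤ a := by linarith
  have ab : a + 4 ≤ b := by linarith
  have a0 : 0 < a := by linarith
  have b0 : 0 < b := by linarith
  -- zeros
  have za : cos (a * (π / (2 * a))) = 0 := by
    rw [show a * (π / (2 * a)) = π / 2 by field_simp, cos_pi_div_two]
  have zb : cos (b * (3 * π / (2 * b))) = 0 := by
    rw [show b * (3 * π / (2 * b)) = π / 2 + π by field_simp; ring, cos_add_pi, cos_pi_div_two, neg_zero]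
  have lta : π / (2 * a) < π / 2 := by
    apply div_lt_div_of_pos_left hpi (by norm_num) (by linarith)
  -- second region
  have reg2 : ∀ s, 0 < s → s ≤ 2 * π / b →
      cos (a * s) * cos (b * s) < cos s ^ 2 := by
    intro s h0 h1
    have h1' : s * b ≤ 2 * π := (le_div_iff₀ b0).1 h1
    have e1 : cos (a * s) * cos (b * s) = (cos ((a + b) * s) + cos ((b - a) * s)) / 2 := by
      rw [show (a + b) * s = a * s + b * s by ring, show (b - a) * s = b * s - a * s by ring,
        cos_add (a * s), cos_sub (b * s)]; ring
    have e2 : cos s ^ 2 = (1 + cos (2 * s)) / 2 := by rw [cos_two_mul]; ring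
    have e3 : cos (2 * s) - cos ((b - a) * s) =
        2 * sin ((b - a + 2) / 2 * s) * sin ((b - a - 2) / 2 * s) := by
      rw [cos_sub_cos, show (2 * s - (b - a) * s) / 2 = - ((b - a - 2) / 2 * s) by ring, sin_neg,
        show (2 * s + (b - a) * s) / 2 = (b - a + 2) / 2 * s by ring]
      ring
    have p1 : 0 < sin ((b - a + 2) / 2 * s) := by
      apply sin_pos_of_pos_of_lt_pi
      · apply mul_pos _ h0; linarith
      · nlinarith
    have p2 : 0 < sin ((b - a - 2) / 2 * s) := by
      apply sin_pos_of_pos_of_lt_pi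
      · apply mul_pos _ h0; linarith
      · nlinarith
    have := mul_pos p1 p2
    have := cos_le_one ((a + b) * s)
    rw [e1, e2]; linarith
  have reg1 : ∀ s, 0 < s → s ≤ π / (2 * a) →
      cos (a * s) * cos (b * s) < cos s ^ 2 := by
    intro s h0 h1
    have h1' : s * (2 * a) ≤ π := (le_div_iff₀ (by positivity)).1 h1
    have c0 : 0 ≤ cos (a * s) := by
      apply cos_nonneg_of_mem_Icc
      constructor <;> nlinarith
    have c1 : cos (a * s) < cos (2 * s) := by
      apply cos_lt_cos_of_nonneg_of_le_pi <;> nlinarith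
    have e2 : cos s ^ 2 = (1 + cos (2 * s)) / 2 := by rw [cos_two_mul]; ring
    have := cos_le_one (b * s)
    have := cos_le_one (2 * s)
    nlinarith
  have lt2 : 2 * π / b < π / 2 := by
    rw [div_lt_div_iff₀ b0 (by norm_num)]; nlinarith
  have pb1 : cos (b * (π / b)) = -1 := by
    rw [show b * (π / b) = π by field_simp, cos_pi]
  rcases lt_trichotomy b (3 * a) with h | h | h
  · refine dip_contra P hs hmon p q σ hσ hP ((π / (2 * a) + π / (2 * b)) / 2) (π / (2 * a))
      (3 * π / (2 * b)) (by positivity) ?_ ?_ ?_ ?_ ?_ ?_ ?_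
    · have : π / (2 * b) < π / (2 * a) := by
        apply div_lt_div_of_pos_left hpi (by linarith) (by linarith)
      linarith
    · rw [div_lt_div_iff₀ (by linarith) (by linarith)]; nlinarith
    · refine lt_of_le_of_lt ?_ lt2
      rw [div_le_div_iff₀ (by linarith) (by linarith)]; nlinarith
    · intro s h0 h1
      apply reg2 s h0 (h1.trans _)
      rw [div_le_div_iff₀ (by linarith) (by linarith)]; nlinarith
    · have f1 : 0 < cos (a * ((π / (2 * a) + π / (2 * b)) / 2)) := by
        have e : a * ((π / (2 * a) + π / (2 * b)) / 2) = π / 4 + π / 4 * (a / b) := by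
          field_simp; norm_num
        have : a / b < 1 := (div_lt_one b0).2 (by linarith)
        have : 0 < a / b := by positivity
        rw [e]
        apply cos_pos_of_mem_Ioo
        constructor <;> nlinarith
      have f2 : cos (b * ((π / (2 * a) + π / (2 * b)) / 2)) < 0 := by
        have e : b * ((π / (2 * a) + π / (2 * b)) / 2) = π / 4 + π / 4 * (b / a) := by
          field_simp; ring
        have : b / a < 3 := (div_lt_iff₀ a0).2 (by linarith)
        have : 1 < b / a := (one_lt_div a0).2 (by linarith)
        rw [e]
        apply cos_neg_of_pi_div_two_lt_of_lt <;> nlinarith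
      exact mul_neg_of_pos_of_neg f1 f2
    · rw [← ha, za, zero_mul]
    · rw [← hb, zb, mul_zero]
  · refine dip_contra P hs hmon p q σ hσ hP (π / b) (π / (2 * a))
      (2 * π / b) (by positivity) ?_ ?_ lt2 reg2 ?_ ?_ ?_
    · rw [div_lt_div_iff₀ (by linarith) (by linarith)]; nlinarith
    · rw [div_lt_div_iff₀ (by linarith) (by linarith)]; nlinarith
    · rw [← hb, ← ha, pb1, h, show a * (π / (3 * a)) = π / 3 by field_simp, cos_pi_div_three]; norm_num
    · rw [← ha, za, zero_mul]
    · rw [← hb, ← ha, show b * (2 * π / b) = 2 * π by field_simp, cos_two_pi, h,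
        show a * (2 * π / (3 * a)) = π - π / 3 by field_simp; ring, cos_pi_sub, cos_pi_div_three]; norm_num
  · refine dip_contra P hs hmon p q σ hσ hP (π / b) (3 * π / (2 * b)) (π / (2 * a))
      (by positivity) ?_ ?_ lta reg1 ?_ ?_ ?_
    · rw [div_lt_div_iff₀ (by linarith) (by linarith)]; nlinarith
    · rw [div_lt_div_iff₀ (by linarith) (by linarith)]; nlinarith
    · rw [← hb, ← ha, pb1]
      have : 0 < cos (a * (π / b)) := by
        have e : a * (π / b) = π * (a / b) := by ring
        have : a / b < 1 / 3 := (div_lt_iff₀ b0).2 (by linarith)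
        have : 0 < a / b := by positivity
        rw [e]
        apply cos_pos_of_mem_Ioo
        constructor <;> nlinarith
      linarith
    · rw [← hb, zb, mul_zero]
    · rw [← ha, za, zero_mul]

theorem aeval_prod_real (z : ℂ) (S : Finset ℕ) (f : ℕ → ℝ) (hz : z.im ≠ 0) :
    (Polynomial.aeval z) (∏ k ∈ S, (X - Polynomial.C (f k))) ≠ 0 := by
  rw [map_prod, Finset.prod_ne_zero_iff]
  intro k _ h
  apply hz
  rw [map_sub, aeval_X, aeval_C, sub_eq_zero] at h
  rw [h]; simp

theorem fact_even (m : ℕ) (hm : 1 ≤ m) (P : ℝ[X])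
    (hP : ∀ x, P.eval x = bb x m * bb x m - 1) :
    P = ∏ k ∈ Finset.Icc 1 m,
        (X - Polynomial.C (4 * Real.cos (π * k / ((2 * m : ℕ) : ℝ)) ^ 2)) *
          (X - Polynomial.C (4 * Real.cos (π * k / (((2 * m : ℕ) : ℝ) + 2)) ^ 2)) := by
  apply poly_eq_of_trig
  intro θ hθ
  have h2 : sin θ ^ 2 ≠ 0 := by positivity
  apply mul_right_cancel₀ h2
  obtain ⟨l, rfl⟩ : ∃ l, m = l + 1 := ⟨m - 1, by omega⟩
  have u1 := U_odd l (cos θ)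
  have u2 := U_odd (l + 1) (cos θ)
  have v1 := Chebyshev.U_real_cos θ ((2 * l + 1 : ℕ) : ℤ)
  have v2 := Chebyshev.U_real_cos θ ((2 * (l + 1) + 1 : ℕ) : ℤ)
  have hb := bb_sin θ (l + 1)
  have split : (∏ k ∈ Finset.Icc 1 (l + 1), (4 * cos θ ^ 2 - 4 * cos (π * k / (2 * l + 2)) ^ 2)) =
      (∏ k ∈ Finset.Icc 1 l, (4 * cos θ ^ 2 - 4 * cos (π * k / (2 * l + 2)) ^ 2)) * (4 * cos θ ^ 2) := by
    rw [Finset.prod_Icc_succ_top (by omega)]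
    congr 1
    have : π * ((l + 1 : ℕ) : ℝ) / (2 * l + 2) = π / 2 := by
      push_cast; have : (l:ℝ) + 1 ≠ 0 := by positivity
      field_simp
    rw [this, cos_pi_div_two]; ring
  have rhs : eval (4 * cos θ ^ 2) (∏ k ∈ Finset.Icc 1 (l + 1),
        (X - Polynomial.C (4 * Real.cos (π * k / ((2 * (l + 1) : ℕ) : ℝ)) ^ 2)) *
          (X - Polynomial.C (4 * Real.cos (π * k / (((2 * (l + 1) : ℕ) : ℝ) + 2)) ^ 2))) =
      (Chebyshev.U ℝ ((2 * l + 1 : ℕ) : ℤ)).eval (cos θ) *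
      (Chebyshev.U ℝ ((2 * (l + 1) + 1 : ℕ) : ℤ)).eval (cos θ) := by
    rw [eval_prod]
    simp only [eval_mul, eval_sub, eval_X, eval_C]
    rw [Finset.prod_mul_distrib, u1, u2]
    push_cast
    rw [show (2 * ((l:ℝ) + 1)) = 2 * l + 2 by ring, split]
    ring
  rw [rhs, hP]
  have e1 : bb (4 * cos θ ^ 2) (l+1) ^ 2 * sin θ ^ 2 = sin ((2 * ((l + 1 : ℕ) : ℝ) + 1) * θ) ^ 2 := by
    rw [← mul_pow, hb, mul_pow, ← pow_mul, mul_comm (l+1) 2, pow_mul]; norm_num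
  calc _ = bb (4 * cos θ ^ 2) (l+1) ^ 2 * sin θ ^ 2 - sin θ ^ 2 := by ring
    _ = sin ((2 * ((l + 1 : ℕ) : ℝ) + 1) * θ) ^ 2 - sin θ ^ 2 := by rw [e1]
    _ = sin ((2 * ((l + 1 : ℕ) : ℝ) + 1) * θ - θ) * sin ((2 * ((l + 1 : ℕ) : ℝ) + 1) * θ + θ) := by
      rw [sin_sub, sin_add]
      have c1 := sin_sq_add_cos_sq θ
      have c2 := sin_sq_add_cos_sq ((2 * ((l + 1 : ℕ) : ℝ) + 1) * θ)
      linear_combination (-sin ((2 * ((l + 1 : ℕ) : ℝ) + 1) * θ) ^ 2) * c1 + sin θ ^ 2 * c2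
    _ = _ := by
      rw [show (2 * ((l + 1 : ℕ) : ℝ) + 1) * θ - θ = ((((2 * l + 1 : ℕ) : ℤ) : ℝ) + 1) * θ by push_cast; ring,
        show (2 * ((l + 1 : ℕ) : ℝ) + 1) * θ + θ = ((((2 * (l + 1) + 1 : ℕ) : ℤ) : ℝ) + 1) * θ by push_cast; ring,
        ← v1, ← v2]
      ring

theorem fact_odd (m : ℕ) (P : ℝ[X])
    (hP : ∀ x, P.eval x = - (bb x m * bb x (m + 1) - 1)) :
    P = ∏ k ∈ Finset.Icc 1 (2 * m + 1),
        (X - Polynomial.C (4 * Real.cos (π * k / (((2 * m + 1 : ℕ) : ℝ) + 1)) ^ 2)) := by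
  apply poly_eq_of_trig
  intro θ hθ
  have h2 : sin θ ^ 2 ≠ 0 := by positivity
  apply mul_right_cancel₀ h2
  have u := U_sq (2 * m + 1) (cos θ)
  have v := Chebyshev.U_real_cos θ ((2 * m + 1 : ℕ) : ℤ)
  have b1 := bb_sin θ m
  have b2 := bb_sin θ (m + 1)
  rw [eval_prod]
  simp only [eval_sub, eval_X, eval_C]
  rw [← u, ← mul_pow, v, hP]
  have hs : ((-1:ℝ) ^ m) * (-1) ^ (m + 1) = -1 := by
    rw [← pow_add, show m + (m + 1) = 2 * m + 1 by ring, pow_succ, pow_mul]; norm_num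
  have e1 : (2 * (m:ℝ) + 1) * θ = ((((2 * m + 1 : ℕ) : ℤ) : ℝ) + 1) * θ - θ := by push_cast; ring
  have e2 : (2 * ((m + 1 : ℕ):ℝ) + 1) * θ = ((((2 * m + 1 : ℕ) : ℤ) : ℝ) + 1) * θ + θ := by
    push_cast; ring
  rw [e1] at b1; rw [e2] at b2
  set A := ((((2 * m + 1 : ℕ) : ℤ) : ℝ) + 1) * θ
  calc _ = sin θ ^ 2 - (bb (4 * cos θ ^ 2) m * sin θ) * (bb (4 * cos θ ^ 2) (m + 1) * sin θ) := by ring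
    _ = sin θ ^ 2 - (((-1:ℝ) ^ m) * (-1) ^ (m + 1)) * (sin (A - θ) * sin (A + θ)) := by
      rw [b1, b2]; ring
    _ = _ := by
      rw [hs, sin_sub, sin_add]
      have c1 := sin_sq_add_cos_sq θ
      have c2 := sin_sq_add_cos_sq A
      linear_combination (sin A ^ 2) * c1 - sin θ ^ 2 * c2

theorem L''_essentially_cyclic_iff (n i : ℕ) (hn : 2 ≤ n) (hi : 1 ≤ i) (hin : i < n)
    (L : Matrix (Fin n) (Fin n) ℝ)
    (hL : ∀ j k : Fin n, L j k =
      if j = k then (if (j : ℕ) = i - 1 ∨ (j : ℕ) = n - 1 then 1 else 2)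
      else if ((j : ℕ) + 1 = (k : ℕ) ∧ (j : ℕ) + 1 ≠ i) ∨ (k : ℕ) + 1 = (j : ℕ) ∨
          ((j : ℕ) = 0 ∧ (k : ℕ) = n - 1) then -1
      else 0) :
    ((∃ z : ℂ, z.im ≠ 0 ∧ (Polynomial.aeval z) L.charpoly = 0) ↔
      ¬(2 * i = n - 1 ∨ 2 * i = n ∨ 2 * i = n + 1)) ∧
    (2 * i = n →
      L.charpoly = ∏ k ∈ Finset.Icc 1 (n / 2),
        (X - Polynomial.C (4 * Real.cos (π * k / n) ^ 2)) *
          (X - Polynomial.C (4 * Real.cos (π * k / (n + 2)) ^ 2))) ∧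
    (2 * i = n - 1 ∨ 2 * i = n + 1 →
      L.charpoly = ∏ k ∈ Finset.Icc 1 n,
        (X - Polynomial.C (4 * Real.cos (π * k / (n + 1)) ^ 2))) := by
  have hP := charpoly_eval n i hn hi hin L hL
  have hmon : L.charpoly.Monic := Matrix.charpoly_monic L
  have hE : 2 * i = n →
      L.charpoly = ∏ k ∈ Finset.Icc 1 (n / 2),
        (X - Polynomial.C (4 * Real.cos (π * k / n) ^ 2)) *
          (X - Polynomial.C (4 * Real.cos (π * k / (n + 2)) ^ 2)) := by
    intro h
    subst h
    rw [show 2 * i / 2 = i by omega]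
    apply fact_even i hi
    intro x
    rw [hP, show 2 * i - i = i by omega, pow_mul]; norm_num
  have hO : 2 * i = n - 1 ∨ 2 * i = n + 1 →
      L.charpoly = ∏ k ∈ Finset.Icc 1 n,
        (X - Polynomial.C (4 * Real.cos (π * k / (n + 1)) ^ 2)) := by
    intro h
    obtain ⟨m, rfl⟩ : ∃ m, n = 2 * m + 1 := ⟨(n - 1) / 2, by omega⟩
    apply fact_odd m
    intro x
    rw [hP, pow_succ, pow_mul]
    rcases h with h | h
    · have : i = m := by omega
      subst this
      rw [show 2 * i + 1 - i = i + 1 by omega]; norm_num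
    · have : i = m + 1 := by omega
      subst this
      rw [show 2 * m + 1 - (m + 1) = m by omega]; norm_num; ring
  refine ⟨⟨?_, ?_⟩, hE, hO⟩
  · rintro ⟨z, hz, h0⟩ h
    by_cases h1 : 2 * i = n
    · rw [hE h1, Finset.prod_mul_distrib, map_mul] at h0
      rcases mul_eq_zero.1 h0 with h0 | h0
      · exact aeval_prod_real z _ _ hz h0
      · exact aeval_prod_real z _ _ hz h0
    · rw [hO (by omega)] at h0
      exact aeval_prod_real z _ _ hz h0
  · intro h
    by_contra hne
    have hs := splits_of_real _ hne
    have hσ : |(-1:ℝ) ^ n| = 1 := by simp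
    rcases le_total i (n - i) with h1 | h1
    · exact not_splits _ hs hmon i (n - i) hi (by omega) _ hσ hP
    · exact not_splits _ hs hmon (n - i) i (by omega) (by omega) _ hσ
        (fun x => by rw [hP, mul_comm (bb x i)])
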